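/- arXiv:2512.19865 — 3 statements merged into one kernel-verified Lean document; each statement's English description precedes it below -/
import Mathlib

section
/- Let ω ⊂ ℝ² be an open set, let f ∈ L¹(ω) with f ≥ 0 in ω, and suppose u satisfies −Δu = f in ω. Then for any ball B_ρ(x₀) with B_ρ(x₀) ⊂ ω and any r ∈ (0, ρ): u(x₀) − inf_ω u ≥ (1/(2π)) (∫_{B_r(x₀)} f(x) dx) · log(ρ/r). -/
open MeasureTheory Filter Metric Set
open scoped ENNReal NNReal Topology

noncomputable section

abbrev E2 : Type := EuclideanSpace ℝ (Fin 2)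

/-- The Laplacian `Δφ = ∑ᵢ ∂²φ/∂xᵢ²` of a function on `ℝ²`. -/
noncomputable def lap (φ : E2 → ℝ) (x : E2) : ℝ :=
  ∑ i : Fin 2,
    iteratedFDeriv ℝ 2 φ x ![EuclideanSpace.single i 1, EuclideanSpace.single i 1]

/-- The Riesz-type convolution operator `I_μ f (x) = ∫_{ℝ²} f(y) |x-y|^{-μ} dy`. -/
noncomputable def Imu (μ : ℝ) (f : E2 → ℝ) (x : E2) : ℝ :=
  ∫ y : E2, f y / ‖x - y‖ ^ μ

/-- `u` is a distributional solution of `-Δu = f` on the open set `ω ⊆ ℝ²`: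
`u ∈ L¹_loc(ω)` and `-∫ u Δφ = ∫ f φ` for all test functions `φ ∈ C_c^∞(ω)`. -/
def IsDistribSol (ω : Set E2) (u f : E2 → ℝ) : Prop :=
  LocallyIntegrableOn u ω volume ∧
    ∀ φ : E2 → ℝ, ContDiff ℝ (⊤ : ℕ∞) φ → HasCompactSupport φ → tsupport φ ⊆ ω →
      -∫ x in ω, u x * lap φ x = ∫ x in ω, f x * φ x

/-- The nonlocal nonlinearity `V · I_μ[e^{λu} χ_Ω] · e^{λu}`. -/
noncomputable def nlRHS (μ lam : ℝ) (V : E2 → ℝ) (Ω : Set E2) (u : E2 → ℝ) (x : E2) : ℝ :=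
  V x * Imu μ (Ω.indicator fun y => Real.exp (lam * u y)) x * Real.exp (lam * u x)

/-- A bounded domain (connected open bounded set) in `ℝ²`. -/
def IsBoundedDomain (s : Set E2) : Prop :=
  IsOpen s ∧ IsConnected s ∧ Bornology.IsBounded s

/-- Smooth step functions. -/
structure IsStep (P : ℝ → ℝ) (a b : ℝ) : Prop where
  smooth : ContDiff ℝ (⊤ : ℕ∞) P
  mono : Monotone P
  zero : ∀ s ≤ a, P s = 0
  one : ∀ s, b ≤ s → P s = 1

lemma exists_step {a b : ℝ} (h : a < b) : ∃ P : ℝ → ℝ, IsStep P a b := by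
  have hb : 0 < b - a := sub_pos.2 h
  refine ⟨fun s => Real.smoothTransition ((s - a) / (b - a)), ?_, ?_, ?_, ?_⟩
  · exact Real.smoothTransition.contDiff.comp ((contDiff_id.sub contDiff_const).div_const _)
  · intro s t hst
    apply Real.smoothTransition.monotone
    gcongr
  · intro s hs
    exact Real.smoothTransition.zero_of_nonpos (div_nonpos_of_nonpos_of_nonneg (by linarith) hb.le)
  · intro s hs
    exact Real.smoothTransition.one_of_one_le ((one_le_div hb).2 (by linarith))

namespace IsStep
variable {P : ℝ → ℝ} {a b : ℝ}

lemma diff (h : IsStep P a b) : Differentiable ℝ P := h.smooth.differentiable (by simp)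

lemma cont_deriv (h : IsStep P a b) : Continuous (deriv P) :=
  h.smooth.continuous_deriv (by simp)

lemma deriv_nonneg (h : IsStep P a b) (s : ℝ) : 0 ≤ deriv P s := h.mono.deriv_nonneg

lemma deriv_right (h : IsStep P a b) (s : ℝ) (hs : b < s) : deriv P s = 0 := by
  have : P =ᶠ[𝓝 s] fun _ => 1 := by
    filter_upwards [Ioi_mem_nhds hs] with t ht using h.one t (le_of_lt ht)
  rw [this.deriv_eq]; simp

lemma mass (h : IsStep P a b) (ha : 0 ≤ a) (x₀ : E2) :
    ∫ x : E2, deriv P (‖x - x₀‖ ^ 2) = Real.pi := by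
  rw [integral_sub_right_eq_self (fun x : E2 => deriv P (‖x‖ ^ 2)) x₀]
  rw [integral_fun_norm_addHaar volume (fun y : ℝ => deriv P (y ^ 2))]
  have hv : (volume : Measure E2).real (ball 0 1) = Real.pi := by
    rw [Measure.real, EuclideanSpace.volume_ball_fin_two]
    simp [Real.pi_pos.le]
  have hd : ∀ x : ℝ, HasDerivAt (fun y : ℝ => P (y ^ 2) / 2) (x * deriv P (x ^ 2)) x := by
    intro x
    have h1 := (h.diff (x ^ 2)).hasDerivAt.comp x (hasDerivAt_pow 2 x)
    have h2 := h1.div_const 2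
    refine h2.congr_deriv ?_
    norm_num; ring
  have hi : ∫ y in Ioi (0 : ℝ), y * deriv P (y ^ 2) = 1 / 2 := by
    rw [integral_Ioi_of_hasDerivAt_of_nonneg' (g := fun y : ℝ => P (y ^ 2) / 2) (l := 1 / 2)
      (fun x _ => hd x) (fun x hx => mul_nonneg (le_of_lt hx) (h.deriv_nonneg _))]
    · simp [h.zero 0 ha]
    · apply Tendsto.congr' _ tendsto_const_nhds
      have : Tendsto (fun y : ℝ => y ^ 2) atTop atTop := tendsto_pow_atTop (by norm_num)
      filter_upwards [this.eventually_ge_atTop b] with y hy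
      rw [h.one _ hy]
  rw [hv]
  simp [hi]
  ring

end IsStep

lemma lap_radial (η h h' : ℝ → ℝ) (hη : ∀ s, HasDerivAt η (-h s) s)
    (hh : ∀ s, HasDerivAt h (h' s) s) (x₀ x : E2) :
    lap (fun x => η (‖x - x₀‖ ^ 2)) x
      = -4 * (h (‖x - x₀‖ ^ 2) + ‖x - x₀‖ ^ 2 * h' (‖x - x₀‖ ^ 2)) := by
  have hq : ∀ y : E2, HasFDerivAt (fun x : E2 => ‖x - x₀‖ ^ 2) (2 • innerSL ℝ (y - x₀)) y := by
    intro y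
    have := ((hasFDerivAt_id y).sub_const x₀).norm_sq
    simpa using this
  have h1 : fderiv ℝ (fun x : E2 => η (‖x - x₀‖ ^ 2)) =
      fun y => (-2 * h (‖y - x₀‖ ^ 2)) • innerSL ℝ (y - x₀) := by
    funext y
    have h0 : HasFDerivAt (fun x : E2 => η (‖x - x₀‖ ^ 2))
        (-h (‖y - x₀‖ ^ 2) • (2 • innerSL ℝ (y - x₀))) y :=
      (hη (‖y - x₀‖ ^ 2)).comp_hasFDerivAt y (hq y)
    rw [h0.fderiv]
    ext v
    simp
    ring
  have hL : HasFDerivAt (fun y : E2 => innerSL ℝ (y - x₀)) (innerSL ℝ : E2 →L[ℝ] E2 →L[ℝ] ℝ) x := by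
    have := (innerSL ℝ : E2 →L[ℝ] E2 →L[ℝ] ℝ).hasFDerivAt.comp x ((hasFDerivAt_id x).sub_const x₀)
    exact this
  have h2 := (((hh _).comp_hasFDerivAt x (hq x)).const_mul (-2)).smul hL
  simp only [Function.comp_def] at h2
  unfold lap
  simp only [iteratedFDeriv_two_apply, h1]
  have h3 := h2.fderiv
  simp only [Pi.smul_def'] at h3
  rw [h3]
  rw [EuclideanSpace.norm_sq_eq]
  have he : ∀ i : Fin 2, (innerSL ℝ (EuclideanSpace.single i (1 : ℝ) : E2))
      (EuclideanSpace.single i (1 : ℝ)) = 1 := by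
    intro i
    rw [innerSL_apply_apply, EuclideanSpace.inner_single_left]
    simp
  simp [Fin.sum_univ_two, EuclideanSpace.inner_single_right, he]
  ring

lemma exists_profile {P₁ P₂ : ℝ → ℝ} {a b c d : ℝ} (ha : 0 < a) (hab : a < b) (hbc : b < c)
    (hcd : c < d) (h₁ : IsStep P₁ a b) (h₂ : IsStep P₂ c d) :
    ∃ η : ℝ → ℝ, ContDiff ℝ (⊤ : ℕ∞) η ∧ (∀ s, 0 ≤ η s) ∧ (∀ s, d ≤ s → η s = 0) ∧
      (∀ t, b ≤ t → t ≤ c → ∀ s ≤ t, 1 / (4 * Real.pi) * Real.log (c / t) ≤ η s) ∧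
      ∀ x₀ x : E2, lap (fun x => η (‖x - x₀‖ ^ 2)) x =
        -(deriv P₁ (‖x - x₀‖ ^ 2) - deriv P₂ (‖x - x₀‖ ^ 2)) / Real.pi := by
  have hpi := Real.pi_pos
  set Q : ℝ → ℝ := fun t => P₁ t - P₂ t with hQ
  have hQs : ContDiff ℝ (⊤ : ℕ∞) Q := h₁.smooth.sub h₂.smooth
  have hQ0 : ∀ t ≤ a, Q t = 0 := fun t ht => by
    simp [hQ, h₁.zero t ht, h₂.zero t (by linarith)]
  have hQd : ∀ t, d ≤ t → Q t = 0 := fun t ht => by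
    simp [hQ, h₂.one t ht, h₁.one t (by linarith)]
  have hQ1 : ∀ t, b ≤ t → t ≤ c → Q t = 1 := fun t ht ht' => by
    simp [hQ, h₂.zero t ht', h₁.one t ht]
  have hQnn : ∀ t, 0 ≤ Q t := by
    intro t
    rcases le_total t c with ht | ht
    · have := h₁.mono (min_le_left t a)
      rw [h₁.zero _ (min_le_right t a)] at this
      simpa [hQ, h₂.zero t ht] using this
    · have := h₂.mono (le_max_left t d)
      rw [h₂.one _ (le_max_right t d)] at this
      simpa [hQ, h₁.one t (by linarith)] using this
  set h : ℝ → ℝ := fun t => Q t / (4 * Real.pi * t) with hh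
  have hhs : ContDiff ℝ (⊤ : ℕ∞) h := by
    rw [contDiff_iff_contDiffAt]
    intro t
    rcases eq_or_ne t 0 with rfl | ht
    · have : h =ᶠ[𝓝 0] fun _ => 0 := by
        filter_upwards [Iio_mem_nhds ha] with t ht
        simp [hh, hQ0 t (le_of_lt ht)]
      exact contDiffAt_const.congr_of_eventuallyEq this
    · exact hQs.contDiffAt.div (contDiffAt_const.mul contDiffAt_id) (by simp [ht, hpi.ne'])
  have hhnn : ∀ t, 0 ≤ h t := by
    intro t
    rcases le_total t a with ht | ht
    · simp [hh, hQ0 t ht]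
    · have : 0 < t := by linarith
      exact div_nonneg (hQnn t) (by positivity)
  have hmul : ∀ t, t * h t = Q t / (4 * Real.pi) := by
    intro t
    rcases eq_or_ne t 0 with rfl | ht
    · simp [hQ0 0 ha.le]
    · simp only [hh]; field_simp
  have hint : ∀ s t, IntervalIntegrable h volume s t := fun s t =>
    hhs.continuous.intervalIntegrable s t
  set η : ℝ → ℝ := fun s => ∫ t in s..d, h t with hη
  have hηd : ∀ s, HasDerivAt η (-h s) s := fun s =>
    intervalIntegral.integral_hasDerivAt_left (hint s d)
      (hhs.continuous.stronglyMeasurableAtFilter _ _) hhs.continuous.continuousAt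
  have hhd : ∀ s, HasDerivAt h (deriv h s) s := fun s =>
    (hhs.differentiable (by simp) s).hasDerivAt
  have hηz : ∀ s, d ≤ s → η s = 0 := by
    intro s hs
    simp only [hη]
    rw [intervalIntegral.integral_congr (g := fun _ => 0)]
    · simp
    · intro t ht
      rw [uIcc_of_ge hs] at ht
      simp [hh, hQd t ht.1]
  refine ⟨η, ?_, ?_, hηz, ?_, ?_⟩
  · have hde : deriv η = fun s => -h s := funext fun s => (hηd s).deriv
    refine contDiff_infty_iff_deriv.2 ⟨fun s => (hηd s).differentiableAt, ?_⟩
    rw [hde]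
    exact hhs.neg
  · intro s
    rcases le_total s d with hs | hs
    · exact intervalIntegral.integral_nonneg hs fun t _ => hhnn t
    · exact (hηz s hs).ge
  · intro t hbt htc s hst
    have e1 : η s = (∫ t in s..t, h t) + ((∫ t in t..c, h t) + ∫ t in c..d, h t) := by
      rw [intervalIntegral.integral_add_adjacent_intervals (hint _ _) (hint _ _),
        intervalIntegral.integral_add_adjacent_intervals (hint _ _) (hint _ _)]
    have e2 : ∫ x in t..c, h x = 1 / (4 * Real.pi) * Real.log (c / t) := by
      rw [← integral_one_div_of_pos (by linarith) (by linarith),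
        ← intervalIntegral.integral_const_mul]
      apply intervalIntegral.integral_congr
      intro x hx
      rw [uIcc_of_le htc] at hx
      simp only [hh, hQ1 x (hbt.trans hx.1) hx.2]
      have : 0 < x := by linarith [hx.1]
      field_simp
    have e3 := intervalIntegral.integral_nonneg (μ := volume) hst fun t _ => hhnn t
    have e4 := intervalIntegral.integral_nonneg (μ := volume) hcd.le fun t _ => hhnn t
    rw [e1, e2]; linarith
  · intro x₀ x
    rw [lap_radial η h (deriv h) hηd hhd]
    set q := ‖x - x₀‖ ^ 2
    have d1 : HasDerivAt (fun t => t * h t) (1 * h q + q * deriv h q) q :=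
      (hasDerivAt_id q).mul (hhd q)
    have d2 : HasDerivAt (fun t => Q t / (4 * Real.pi))
        ((deriv P₁ q - deriv P₂ q) / (4 * Real.pi)) q :=
      ((h₁.diff q).hasDerivAt.sub (h₂.diff q).hasDerivAt).div_const _
    rw [funext hmul] at d1
    have := d1.unique d2
    rw [one_mul] at this
    rw [this]
    field_simp

/-- The radial kernels: a weighted average over a small closed ball. -/
lemma kernel_facts {P : ℝ → ℝ} {a R R' : ℝ} (h : IsStep P a (R ^ 2)) (ha : 0 ≤ a) (hR : 0 < R)
    (hRR : R ≤ R') (x₀ : E2) :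
    (∀ x ∉ closedBall x₀ R, deriv P (‖x - x₀‖ ^ 2) = 0) ∧
    (∫ x in closedBall x₀ R', deriv P (‖x - x₀‖ ^ 2) / Real.pi = 1) := by
  have h0 : ∀ x ∉ closedBall x₀ R, deriv P (‖x - x₀‖ ^ 2) = 0 := by
    intro x hx
    apply h.deriv_right
    rw [mem_closedBall, dist_eq_norm, not_le] at hx
    gcongr
  refine ⟨h0, ?_⟩
  rw [setIntegral_eq_integral_of_forall_compl_eq_zero, integral_div, h.mass ha, div_self Real.pi_ne_zero]
  intro x hx
  rw [h0 x fun hh => hx (closedBall_subset_closedBall hRR hh), zero_div]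

/-- Lemma 4.3: Green-type lower bound.
If `-Δu = f ≥ 0` in `ω` and `B_ρ(x₀) ⊆ ω`, then for all `r ∈ (0, ρ)`:
`u(x₀) - inf_ω u ≥ (1/(2π)) (∫_{B_r(x₀)} f) log(ρ/r)`
(expressed in the equivalent `ε`-form, so that `inf_ω u = -∞` is allowed). -/
theorem stmt_14
    (ω : Set E2) (hω : IsOpen ω)
    (f : E2 → ℝ) (hf : IntegrableOn f ω volume) (hf0 : ∀ x ∈ ω, 0 ≤ f x)
    (u : E2 → ℝ) (hu : ContinuousOn u ω)
    (hsol : IsDistribSol ω u f)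
    (x₀ : E2) (ρ : ℝ) (hρ : 0 < ρ) (hball : ball x₀ ρ ⊆ ω)
    (r : ℝ) (hr : r ∈ Set.Ioo 0 ρ) :
    ∀ ε > (0 : ℝ), ∃ y ∈ ω,
      u y + (1 / (2 * Real.pi)) * (∫ x in ball x₀ r, f x) * Real.log (ρ / r)
        ≤ u x₀ + ε := by
  intro ε hε
  by_contra! hcon
  obtain ⟨hr0, hrρ⟩ := hr
  have hpi := Real.pi_pos
  set M := ∫ x in ball x₀ r, f x with hM
  have hx₀ : x₀ ∈ ω := hball (mem_ball_self hρ)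
  -- choose the outer radii
  obtain ⟨ρ₁, ⟨hrρ₁, hρ₁ρ⟩, hρ₁⟩ : ∃ ρ₁ ∈ Ioo r ρ,
      1 / (2 * Real.pi) * M * Real.log (ρ / r) - ε / 4 <
        1 / (2 * Real.pi) * M * Real.log (ρ₁ / r) := by
    have hc : ContinuousAt (fun t => 1 / (2 * Real.pi) * M * Real.log (t / r)) ρ := by
      apply ContinuousAt.mul continuousAt_const
      exact ContinuousAt.log (continuousAt_id.div_const r) (div_pos hρ hr0).ne'
    have h1 : ∀ᶠ t in 𝓝[<] ρ, 1 / (2 * Real.pi) * M * Real.log (ρ / r) - ε / 4 <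
        1 / (2 * Real.pi) * M * Real.log (t / r) :=
      (hc.eventually_const_lt (by simp only; linarith)).filter_mono nhdsWithin_le_nhds
    have h2 : ∀ᶠ t in 𝓝[<] ρ, t ∈ Ioo r ρ := Ioo_mem_nhdsLT hrρ
    obtain ⟨t, ht1, ht2⟩ := (h1.and h2).exists
    exact ⟨t, ht2, ht1⟩
  obtain ⟨ρ₂, hρ₁₂, hρ₂ρ⟩ := exists_between hρ₁ρ
  -- choose the inner radius
  obtain ⟨δ, hδ0, hδr, hδ⟩ : ∃ δ > 0, δ ≤ r ∧ ∀ x ∈ closedBall x₀ δ, u x ≤ u x₀ + ε / 4 := by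
    have hc : ContinuousAt u x₀ := hu.continuousAt (hω.mem_nhds hx₀)
    have h1 : ∀ᶠ x in 𝓝 x₀, u x < u x₀ + ε / 4 := hc.eventually_lt_const (by linarith)
    obtain ⟨δ, hδ, hδ'⟩ := Metric.nhds_basis_closedBall.eventually_iff.1 h1
    refine ⟨min δ r, lt_min hδ hr0, min_le_right _ _, fun x hx => (hδ' ?_).le⟩
    exact closedBall_subset_closedBall (min_le_left _ _) hx
  have hρ₁0 : 0 < ρ₁ := hr0.trans hrρ₁
  have hρ₂0 : 0 < ρ₂ := hρ₁0.trans hρ₁₂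
  have hδρ₂ : δ ≤ ρ₂ := by linarith
  obtain ⟨P₁, hP₁⟩ := exists_step (a := δ ^ 2 / 2) (b := δ ^ 2) (by nlinarith)
  obtain ⟨P₂, hP₂⟩ := exists_step (a := ρ₁ ^ 2) (b := ρ₂ ^ 2) (by gcongr)
  obtain ⟨η, hηs, hηnn, hηz, hηlow, hηlap⟩ := exists_profile (by positivity)
    (by nlinarith) (show δ ^ 2 < ρ₁ ^ 2 by gcongr; linarith) (by gcongr) hP₁ hP₂
  obtain ⟨hk₁, hm₁⟩ := kernel_facts hP₁ (by positivity) hδ0 hδρ₂ x₀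
  obtain ⟨hk₂, hm₂⟩ := kernel_facts hP₂ (by positivity) hρ₂0 le_rfl x₀
  set K := closedBall x₀ ρ₂ with hK
  have hKω : K ⊆ ω := (closedBall_subset_ball hρ₂ρ).trans hball
  have hKc : IsCompact K := isCompact_closedBall _ _
  set φ : E2 → ℝ := fun x => η (‖x - x₀‖ ^ 2) with hφ
  have hφs : ContDiff ℝ (⊤ : ℕ∞) φ := hηs.comp ((contDiff_id.sub contDiff_const).norm_sq ℝ)
  have hφK : ∀ x ∉ K, φ x = 0 := by
    intro x hx
    apply hηz
    rw [hK, mem_closedBall, dist_eq_norm, not_le] at hx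
    gcongr
  have hφsupp : tsupport φ ⊆ K :=
    closure_minimal (fun x hx => by_contra fun h => hx (hφK x h)) isClosed_closedBall
  have hφc : HasCompactSupport φ := HasCompactSupport.intro hKc hφK
  have key := hsol.2 φ hφs hφc (hφsupp.trans hKω)
  -- right-hand side
  have hrω : ball x₀ r ⊆ ω := (ball_subset_ball hrρ.le).trans hball
  have hRHS : 1 / (4 * Real.pi) * Real.log (ρ₁ ^ 2 / r ^ 2) * M ≤ ∫ x in ω, f x * φ x := by
    obtain ⟨C, hC⟩ := hφs.continuous.bounded_above_of_compact_support hφc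
    have hi : IntegrableOn (fun x => f x * φ x) ω volume :=
      Integrable.mul_bdd hf hφs.continuous.aestronglyMeasurable (Eventually.of_forall hC)
    calc 1 / (4 * Real.pi) * Real.log (ρ₁ ^ 2 / r ^ 2) * M
        = ∫ x in ball x₀ r, 1 / (4 * Real.pi) * Real.log (ρ₁ ^ 2 / r ^ 2) * f x := by
          rw [integral_const_mul]
      _ ≤ ∫ x in ball x₀ r, f x * φ x := by
          apply setIntegral_mono_on ((hf.mono_set hrω).const_mul _) (hi.mono_set hrω)
            measurableSet_ball
          intro x hx
          rw [mul_comm]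
          apply mul_le_mul_of_nonneg_left _ (hf0 x (hrω hx))
          apply hηlow (r ^ 2) (by gcongr) (by gcongr)
          rw [mem_ball, dist_eq_norm] at hx
          gcongr
      _ ≤ ∫ x in ω, f x * φ x := by
          apply setIntegral_mono_set hi _ (Eventually.of_forall hrω)
          filter_upwards [ae_restrict_mem hω.measurableSet] with x hx
          exact mul_nonneg (hf0 x hx) (hηnn _)
  -- left-hand side
  set k₁ : E2 → ℝ := fun x => deriv P₁ (‖x - x₀‖ ^ 2) / Real.pi with hk₁d
  set k₂ : E2 → ℝ := fun x => deriv P₂ (‖x - x₀‖ ^ 2) / Real.pi with hk₂d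
  have hk₁c : Continuous k₁ :=
    (hP₁.cont_deriv.comp ((continuous_id.sub continuous_const).norm.pow 2)).div_const _
  have hk₂c : Continuous k₂ :=
    (hP₂.cont_deriv.comp ((continuous_id.sub continuous_const).norm.pow 2)).div_const _
  have hk₁nn : ∀ x, 0 ≤ k₁ x := fun x => div_nonneg (hP₁.deriv_nonneg _) hpi.le
  have hk₂nn : ∀ x, 0 ≤ k₂ x := fun x => div_nonneg (hP₂.deriv_nonneg _) hpi.le
  have huK : ContinuousOn u K := hu.mono hKω
  have i₁ : IntegrableOn (fun x => u x * k₁ x) K volume :=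
    (huK.mul hk₁c.continuousOn).integrableOn_compact hKc
  have i₂ : IntegrableOn (fun x => u x * k₂ x) K volume :=
    (huK.mul hk₂c.continuousOn).integrableOn_compact hKc
  have hLHS : -∫ x in ω, u x * lap φ x = (∫ x in K, u x * k₁ x) - ∫ x in K, u x * k₂ x := by
    rw [← integral_sub i₁ i₂, ← integral_neg]
    have e : ∀ x, -(u x * lap φ x) = u x * k₁ x - u x * k₂ x := by
      intro x
      rw [hηlap x₀ x]
      simp only [hk₁d, hk₂d]
      ring
    simp only [e]
    apply setIntegral_eq_of_subset_of_forall_sdiff_eq_zero hω.measurableSet hKω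
    intro x hx
    have z₁ := hk₁ x fun h => hx.2 (closedBall_subset_closedBall hδρ₂ h)
    have z₂ := hk₂ x hx.2
    simp [hk₁d, hk₂d, z₁, z₂]
  have hup : ∫ x in K, u x * k₁ x ≤ u x₀ + ε / 4 := by
    calc ∫ x in K, u x * k₁ x ≤ ∫ x in K, (u x₀ + ε / 4) * k₁ x := by
          apply setIntegral_mono_on i₁
            ((continuous_const.mul hk₁c).continuousOn.integrableOn_compact hKc)
            measurableSet_closedBall
          intro x hx
          by_cases hxδ : x ∈ closedBall x₀ δ
          · exact mul_le_mul_of_nonneg_right (hδ x hxδ) (hk₁nn x)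
          · simp [hk₁d, hk₁ x hxδ]
      _ = u x₀ + ε / 4 := by rw [integral_const_mul, hm₁, mul_one]
  set m := u x₀ + ε - 1 / (2 * Real.pi) * M * Real.log (ρ / r) with hm
  have hlow : m ≤ ∫ x in K, u x * k₂ x := by
    calc m = ∫ x in K, m * k₂ x := by rw [integral_const_mul, hm₂, mul_one]
      _ ≤ ∫ x in K, u x * k₂ x := by
          apply setIntegral_mono_on
            ((continuous_const.mul hk₂c).continuousOn.integrableOn_compact hKc) i₂
            measurableSet_closedBall
          intro x hx
          apply mul_le_mul_of_nonneg_right _ (hk₂nn x)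
          have := hcon x (hKω hx)
          linarith
  have hlog : 1 / (4 * Real.pi) * Real.log (ρ₁ ^ 2 / r ^ 2) * M
      = 1 / (2 * Real.pi) * M * Real.log (ρ₁ / r) := by
    rw [← div_pow, Real.log_pow]
    push_cast
    field_simp
    ring
  rw [hlog] at hRHS
  rw [hLHS] at key
  linarith
end
end

section
/- Let n ∈ ℕ, let (x̃, ρ) ∈ ℝⁿ × (0,∞) and let φ be a positive continuous function on the closed ball B̄_ρ(x̃). For any a > 0 there exist x ∈ B_ρ(x̃) and r = r(x) > 0 such that both φ(x) ≥ (ρ/(2r))^a · φ(x̃) and φ(x) ≥ (1/2)^a · max_{y ∈ B̄_r(x)} φ(y). -/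
open Metric Set

noncomputable section

/-- Lemma A.5: selection lemma.
For a positive continuous `φ` on `B̄_ρ(x̃) ⊆ ℝⁿ` and any `a > 0` there are
`x ∈ B_ρ(x̃)` and `r > 0` with `φ(x) ≥ (ρ/(2r))^a φ(x̃)` and
`φ(x) ≥ (1/2)^a max_{B̄_r(x)} φ`. -/
theorem stmt_15 (n : ℕ)
    (xt : EuclideanSpace ℝ (Fin n)) (ρ : ℝ) (hρ : 0 < ρ)
    (φ : EuclideanSpace ℝ (Fin n) → ℝ)
    (hφc : ContinuousOn φ (closedBall xt ρ))
    (hφpos : ∀ y ∈ closedBall xt ρ, 0 < φ y)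
    (a : ℝ) (ha : 0 < a) :
    ∃ x ∈ ball xt ρ, ∃ r : ℝ, 0 < r ∧
      (ρ / (2 * r)) ^ a * φ xt ≤ φ x ∧
      ∀ y ∈ closedBall x r, ((1 : ℝ) / 2) ^ a * φ y ≤ φ x := by
  have hcont : ContinuousOn (fun y => (ρ - dist y xt) ^ a * φ y) (closedBall xt ρ) := by
    refine ContinuousOn.mul ?_ hφc
    refine ContinuousOn.rpow_const (by fun_prop) ?_
    intro y _
    exact Or.inr ha.le
  obtain ⟨x, hx, hmax⟩ := (isCompact_closedBall xt ρ).exists_isMaxOn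
    ⟨xt, mem_closedBall_self hρ.le⟩ hcont
  have hxt : xt ∈ closedBall xt ρ := mem_closedBall_self hρ.le
  have hle : ∀ y ∈ closedBall xt ρ,
      (ρ - dist y xt) ^ a * φ y ≤ (ρ - dist x xt) ^ a * φ x := fun y hy => hmax hy
  have h0 := hle xt hxt
  rw [dist_self, sub_zero] at h0
  have hpos : 0 < ρ ^ a * φ xt := mul_pos (Real.rpow_pos_of_pos hρ a) (hφpos xt hxt)
  have hd : dist x xt ≤ ρ := hx
  have hlt : dist x xt < ρ := by
    rcases hd.lt_or_eq with h | h
    · exact h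
    · rw [h, sub_self, Real.zero_rpow ha.ne', zero_mul] at h0
      linarith
  obtain ⟨r, hr⟩ : ∃ r, r = (ρ - dist x xt) / 2 := ⟨_, rfl⟩
  have hr0 : 0 < r := by rw [hr]; linarith
  have h2r : ρ - dist x xt = 2 * r := by rw [hr]; ring
  rw [h2r] at hle h0
  have h2r0 : 0 < 2 * r := by linarith
  refine ⟨x, hlt, r, hr0, ?_, ?_⟩
  · rw [Real.div_rpow hρ.le h2r0.le, div_mul_eq_mul_div, div_le_iff₀ (Real.rpow_pos_of_pos h2r0 a)]
    linarith
  · intro y hy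
    have hyx : dist y x ≤ r := hy
    have htri := dist_triangle y x xt
    have hyb : y ∈ closedBall xt ρ := by
      rw [mem_closedBall]; linarith
    have h1 := hle y hyb
    have h2 : r ^ a ≤ (ρ - dist y xt) ^ a :=
      Real.rpow_le_rpow hr0.le (by linarith) ha.le
    have h3 := mul_le_mul_of_nonneg_right h2 (hφpos y hyb).le
    have h4 : ((1 : ℝ) / 2) ^ a * (2 * r) ^ a = r ^ a := by
      rw [← Real.mul_rpow (by norm_num) h2r0.le]
      congr 1
      ring
    have h5 : 0 < (2 * r) ^ a := Real.rpow_pos_of_pos h2r0 a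
    refine le_of_mul_le_mul_left ?_ h5
    calc (2 * r) ^ a * (((1 : ℝ) / 2) ^ a * φ y)
        = (((1 : ℝ) / 2) ^ a * (2 * r) ^ a) * φ y := by ring
      _ = r ^ a * φ y := by rw [h4]
      _ ≤ (2 * r) ^ a * φ x := h3.trans h1
end
end

section
/- Let μ ∈ (0,2), λ = (4−μ)/4 and A = (4(2−μ)/π)^{1/(4−μ)}. For k ∈ ℕ define u_k(x) = 2 log(Ak/(1 + k²|x|²)) on ℝ², set F_k = I_μ[e^{λu_k}] e^{λu_k} · (I_μ[e^{λu_k}] / I_μ[e^{λu_k}χ_{B_2}])^{0} appropriately, i.e. F_k(x) = V_k(x) I_μ[e^{λu_k}χ_{B_2}](x) e^{λu_k(x)} with V_k = I_μ[e^{λu_k}] / I_μ[e^{λu_k}χ_{B_2}], so that −Δu_k = F_k = 8k²/(1+k²|x|²)² on ℝ². Then, with Γ(y) = −(1/(2π)) log|y|, the function u_k − Γ∗F_k is constant on ℝ² and equals 2 log A − 2 log k; in particular u_k − Γ∗F_k → −∞ uniformly as k → ∞. -/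
open MeasureTheory Filter Metric Set
open scoped ENNReal NNReal Topology

noncomputable section

/-- The fundamental solution `Γ(y) = -(1/2π) log |y|` of `-Δ` on `ℝ²`. -/
noncomputable def gammaKer (y : E2) : ℝ := -(1 / (2 * Real.pi)) * Real.log ‖y‖

lemma aux_circle (a : ℂ) (r : ℝ) (hr : 0 < r) :
    IntegrableOn (fun θ : ℝ => Real.log ‖circleMap 0 r θ - a‖) (Ioo (-Real.pi) Real.pi) ∧
    ∫ θ in Ioo (-Real.pi) Real.pi, Real.log ‖circleMap 0 r θ - a‖
      = 2 * Real.pi * Real.log (max ‖a‖ r) := by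
  have hpi := Real.pi_pos
  have hper : Function.Periodic (fun θ : ℝ => Real.log ‖circleMap 0 r θ - a‖) (2 * Real.pi) :=
    fun x => by simp [periodic_circleMap 0 r x]
  have hci : IntervalIntegrable (fun θ : ℝ => Real.log ‖circleMap 0 r θ - a‖) volume
      0 (2 * Real.pi) :=
    circleIntegrable_log_norm_sub_const (a := a) (c := 0) r
  have hii : IntervalIntegrable (fun θ : ℝ => Real.log ‖circleMap 0 r θ - a‖) volume
      (-Real.pi) Real.pi := by
    have h0 : IntervalIntegrable (fun θ : ℝ => Real.log ‖circleMap 0 r θ - a‖) volume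
      0 (0 + 2 * Real.pi) := by simpa using hci
    exact hper.intervalIntegrable (by positivity) h0 _ _
  constructor
  · rw [intervalIntegrable_iff_integrableOn_Ioo_of_le (by linarith)] at hii
    exact hii
  · rw [← integral_Ioc_eq_integral_Ioo, ← intervalIntegral.integral_of_le (by linarith)]
    have h1 := hper.intervalIntegral_add_eq (-Real.pi) 0
    have h2 : -Real.pi + 2 * Real.pi = Real.pi := by ring
    rw [h2, zero_add] at h1
    rw [h1]
    have h3 := circleAverage_log_norm_sub_const_eq_log_radius_add_posLog (a := a) (c := 0) hr.ne'
    rw [Real.circleAverage_def, smul_eq_mul] at h3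
    have h4 : Real.log r + Real.posLog (r⁻¹ * ‖0 - a‖) = Real.log (max ‖a‖ r) := by
      rw [zero_sub, norm_neg]
      rcases le_total ‖a‖ r with h | h
      · rw [max_eq_right h, (Real.posLog_eq_zero_iff _).2, add_zero]
        rw [abs_of_nonneg (by positivity)]
        exact inv_mul_le_one_of_le₀ h hr.le
      · rw [max_eq_left h, Real.posLog_eq_log, Real.log_mul (by positivity) (by linarith), 
          Real.log_inv]
        · ring
        · rw [abs_of_nonneg (by positivity)]
          rw [inv_mul_eq_div, le_div_iff₀ hr]; linarith
    rw [h4] at h3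
    rw [← h3]
    field_simp

/-- absolute value bound on the circle -/
lemma aux_circle_abs (a : ℂ) (r : ℝ) (hr : 0 < r) :
    r * ∫ θ in Ioo (-Real.pi) Real.pi, |Real.log ‖circleMap 0 r θ - a‖|
      ≤ 2 * Real.pi * (3 * (r * (‖a‖ + r)) + 1) := by
  have hpi := Real.pi_pos
  obtain ⟨hI, hv⟩ := aux_circle a r hr
  have hb : ∀ θ : ℝ, |Real.log ‖circleMap 0 r θ - a‖| ≤
      2 * (‖a‖ + r) - Real.log ‖circleMap 0 r θ - a‖ := by
    intro θ
    have h1 : ‖circleMap 0 r θ - a‖ ≤ ‖a‖ + r := by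
      refine (norm_sub_le _ _).trans ?_
      simp [abs_of_pos hr, add_comm]
    have h2 := Real.log_le_self (norm_nonneg (circleMap 0 r θ - a))
    have h3 := norm_nonneg a
    rw [abs_le]
    constructor <;> linarith
  have hcI : IntegrableOn (fun θ : ℝ => 2 * (‖a‖ + r)) (Ioo (-Real.pi) Real.pi) :=
    integrableOn_const (by simp)
  have h1 : ∫ θ in Ioo (-Real.pi) Real.pi, |Real.log ‖circleMap 0 r θ - a‖| ≤
      ∫ θ in Ioo (-Real.pi) Real.pi, (2 * (‖a‖ + r) - Real.log ‖circleMap 0 r θ - a‖) :=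
    integral_mono hI.abs (hcI.sub hI) hb
  rw [integral_sub hcI hI, hv] at h1
  simp only [integral_const, smul_eq_mul] at h1
  have hvol : (volume.restrict (Ioo (-Real.pi) Real.pi)).real univ = 2 * Real.pi := by
    rw [measureReal_restrict_apply_univ, Real.volume_real_Ioo_of_le (by linarith)]; ring
  rw [hvol] at h1
  set m := max ‖a‖ r with hm
  have hrm : r ≤ m := le_max_right _ _
  have hmp : 0 < m := hr.trans_le hrm
  have hlog : -(r * Real.log m) ≤ 1 := by
    have h2 := Real.log_le_sub_one_of_pos (inv_pos.2 hmp)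
    rw [Real.log_inv] at h2
    have h3 : r * m⁻¹ ≤ 1 := by
      rw [← div_eq_mul_inv]; exact (div_le_one hmp).2 hrm
    nlinarith
  have h4 := norm_nonneg a
  have h5 : 0 ≤ r * (‖a‖ + r) := by positivity
  calc _ ≤ r * (2 * Real.pi * (2 * (‖a‖ + r)) - 2 * Real.pi * Real.log m) :=
        mul_le_mul_of_nonneg_left h1 hr.le
    _ = 2 * Real.pi * (2 * (r * (‖a‖ + r)) + -(r * Real.log m)) := by ring
    _ ≤ _ := by
      apply mul_le_mul_of_nonneg_left _ (by positivity)
      linarith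

/-- the radial antiderivative limit -/
lemma aux_lim (K : ℝ) (hK : 1 ≤ K) :
    Tendsto (fun r : ℝ => 4 * (Real.log r * (K ^ 2 * r ^ 2 / (1 + K ^ 2 * r ^ 2)))
      - 2 * Real.log (1 + K ^ 2 * r ^ 2)) atTop (𝓝 (-4 * Real.log K)) := by
  have hK0 : 0 < K := by linarith
  have h1 : Tendsto (fun r : ℝ => Real.log r / (1 + K ^ 2 * r ^ 2)) atTop (𝓝 0) := by
    have h0 : Tendsto (fun r : ℝ => Real.log r / r) atTop (𝓝 0) := by
      have := Real.isLittleO_log_id_atTop.tendsto_div_nhds_zero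
      simpa using this
    refine squeeze_zero' ?_ ?_ h0
    · filter_upwards [eventually_ge_atTop 1] with r hr
      have := Real.log_nonneg hr
      positivity
    · filter_upwards [eventually_ge_atTop 1] with r hr
      have := Real.log_nonneg hr
      gcongr
      nlinarith [mul_le_mul hK hK (by norm_num) hK0.le, sq_nonneg r, sq_nonneg (K*r)]
  have h2 : Tendsto (fun r : ℝ => Real.log ((r ^ 2)⁻¹ + K ^ 2)) atTop
      (𝓝 (Real.log (0 + K ^ 2))) := by
    apply Tendsto.log _ (by positivity)
    exact (tendsto_inv_atTop_zero.comp (tendsto_pow_atTop (by norm_num))).add_const _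
  have h3 := (h1.const_mul (-4)).sub (h2.const_mul 2)
  have e : -4 * (0:ℝ) - 2 * Real.log (0 + K ^ 2) = -4 * Real.log K := by
    rw [zero_add, Real.log_pow]; push_cast; ring
  rw [e] at h3
  refine h3.congr' ?_
  filter_upwards [eventually_gt_atTop 0] with r hr
  have e2 : (r ^ 2)⁻¹ + K ^ 2 = (1 + K ^ 2 * r ^ 2) / r ^ 2 := by field_simp
  rw [e2, Real.log_div (by positivity) (by positivity), Real.log_pow]
  push_cast
  field_simp
  ring

lemma aux_radial (K a : ℝ) (hK : 1 ≤ K) (ha : 0 ≤ a)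
    (hint : IntegrableOn (fun r : ℝ => r * (8 * K ^ 2 / (1 + K ^ 2 * r ^ 2) ^ 2)
      * Real.log (max a r)) (Ioi 0)) :
    ∫ r in Ioi (0:ℝ), r * (8 * K ^ 2 / (1 + K ^ 2 * r ^ 2) ^ 2) * Real.log (max a r)
      = 2 * Real.log (1 + K ^ 2 * a ^ 2) - 4 * Real.log K := by
  have hK0 : 0 < K := by linarith
  have hden : ∀ r : ℝ, 1 + K ^ 2 * r ^ 2 ≠ 0 := fun r => by positivity
  have hq : ∀ r : ℝ, HasDerivAt (fun r : ℝ => K ^ 2 * r ^ 2 / (1 + K ^ 2 * r ^ 2))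
      (2 * K ^ 2 * r / (1 + K ^ 2 * r ^ 2) ^ 2) r := by
    intro r
    have h1 : HasDerivAt (fun r : ℝ => K ^ 2 * r ^ 2) (2 * K ^ 2 * r) r := by
      have := (hasDerivAt_pow 2 r).const_mul (K ^ 2)
      convert! this using 1
      push_cast; ring
    have := h1.div (h1.const_add 1) (hden r)
    convert! this using 1
    ring
  have hl : ∀ r : ℝ, HasDerivAt (fun r : ℝ => Real.log (1 + K ^ 2 * r ^ 2))
      (2 * K ^ 2 * r / (1 + K ^ 2 * r ^ 2)) r := by
    intro r
    have h1 : HasDerivAt (fun r : ℝ => K ^ 2 * r ^ 2) (2 * K ^ 2 * r) r := by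
      have := (hasDerivAt_pow 2 r).const_mul (K ^ 2)
      convert! this using 1
      push_cast; ring
    exact (h1.const_add 1).log (hden r)
  have hsplit : Ioi (0:ℝ) = Ioc 0 a ∪ Ioi a := (Ioc_union_Ioi_eq_Ioi ha).symm
  rw [hsplit, setIntegral_union (by
      rw [Set.disjoint_left]; intro x hx hx'; exact not_lt.2 hx.2 hx') measurableSet_Ioi
    (hint.mono_set (by rw [hsplit]; exact subset_union_left))
    (hint.mono_set (by rw [hsplit]; exact subset_union_right))]
  have hint2 := hint.mono_set (show Ioi a ⊆ Ioi 0 from Ioi_subset_Ioi ha)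
  have I1 : ∫ r in Ioc 0 a, r * (8 * K ^ 2 / (1 + K ^ 2 * r ^ 2) ^ 2) * Real.log (max a r)
      = 4 * (Real.log a * (K ^ 2 * a ^ 2 / (1 + K ^ 2 * a ^ 2))) := by
    have e : ∫ r in Ioc 0 a, r * (8 * K ^ 2 / (1 + K ^ 2 * r ^ 2) ^ 2) * Real.log (max a r)
       = ∫ r in Ioc 0 a, 4 * (Real.log a * (2 * K ^ 2 * r / (1 + K ^ 2 * r ^ 2) ^ 2)) := by
      apply setIntegral_congr_fun measurableSet_Ioc
      intro r hr
      simp only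
      rw [max_eq_left hr.2]
      ring
    rw [e, ← intervalIntegral.integral_of_le ha,
      intervalIntegral.integral_eq_sub_of_hasDerivAt
        (f := fun r => 4 * (Real.log a * (K ^ 2 * r ^ 2 / (1 + K ^ 2 * r ^ 2))))
        (fun r _ => ((hq r).const_mul _).const_mul _)]
    · simp
    · apply Continuous.intervalIntegrable
      have : ∀ r : ℝ, (1 + K ^ 2 * r ^ 2) ^ 2 ≠ 0 := fun r => pow_ne_zero _ (hden r)
      fun_prop (disch := assumption)
  have I2 : ∫ r in Ioi a, r * (8 * K ^ 2 / (1 + K ^ 2 * r ^ 2) ^ 2) * Real.log (max a r)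
      = -4 * Real.log K - (4 * (Real.log a * (K ^ 2 * a ^ 2 / (1 + K ^ 2 * a ^ 2)))
          - 2 * Real.log (1 + K ^ 2 * a ^ 2)) := by
    refine integral_Ioi_of_hasDerivAt_of_tendsto (f := fun r : ℝ =>
      4 * (Real.log r * (K ^ 2 * r ^ 2 / (1 + K ^ 2 * r ^ 2)))
      - 2 * Real.log (1 + K ^ 2 * r ^ 2)) ?_ ?_ hint2 (aux_lim K hK)
    · apply Continuous.continuousWithinAt
      have : (fun r : ℝ => 4 * (Real.log r * (K ^ 2 * r ^ 2 / (1 + K ^ 2 * r ^ 2)))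
      - 2 * Real.log (1 + K ^ 2 * r ^ 2)) = (fun r : ℝ => 4 * ((r * Real.log r) * (K ^ 2 * r / (1 + K ^ 2 * r ^ 2)))
      - 2 * Real.log (1 + K ^ 2 * r ^ 2)) := by
        ext r; ring
      rw [this]
      have := Real.continuous_mul_log
      fun_prop (disch := assumption)
    · intro r hr
      have hr0 : 0 < r := lt_of_le_of_lt ha hr
      rw [max_eq_right (le_of_lt hr)]
      have := (((Real.hasDerivAt_log hr0.ne').mul (hq r)).const_mul 4).sub ((hl r).const_mul 2)
      convert! this using 1
      have := hden r
      field_simp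
      ring
  rw [I1, I2]
  ring

lemma aux_complex (K : ℝ) (hK : 1 ≤ K) (a : ℂ) :
    ∫ z : ℂ, Real.log ‖z - a‖ * (8 * K ^ 2 / (1 + K ^ 2 * ‖z‖ ^ 2) ^ 2)
      = 2 * Real.pi * (2 * Real.log (1 + K ^ 2 * ‖a‖ ^ 2) - 4 * Real.log K) := by
  have hK0 : 0 < K := by linarith
  have hpi := Real.pi_pos
  set w : ℝ → ℝ := fun r => 8 * K ^ 2 / (1 + K ^ 2 * r ^ 2) ^ 2 with hw
  have hw0 : ∀ r, 0 ≤ w r := fun r => by simp only [hw]; positivity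
  have hwc : Continuous w := by
    have : ∀ r : ℝ, (1 + K ^ 2 * r ^ 2) ^ 2 ≠ 0 := fun r => by positivity
    simp only [hw]
    fun_prop (disch := assumption)
  set f : ℝ × ℝ → ℝ := fun p => p.1 * w p.1 * Real.log ‖circleMap 0 p.1 p.2 - a‖ with hf
  rw [← Complex.integral_comp_polarCoord_symm]
  have e1 : ∫ p in polarCoord.target, p.1 • (Real.log ‖Complex.polarCoord.symm p - a‖ *
      (8 * K ^ 2 / (1 + K ^ 2 * ‖Complex.polarCoord.symm p‖ ^ 2) ^ 2)) =
      ∫ p in Ioi (0:ℝ) ×ˢ Ioo (-Real.pi) Real.pi, f p := by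
    apply setIntegral_congr_fun (measurableSet_Ioi.prod measurableSet_Ioo)
    intro p hp
    have e : Complex.polarCoord.symm p = circleMap 0 p.1 p.2 := by
      rw [Complex.polarCoord_symm_apply, circleMap, Complex.exp_mul_I]
      simp
    simp only [Complex.norm_polarCoord_symm, sq_abs]
    simp only [hf, hw, e, smul_eq_mul]
    ring
  rw [e1]
  have hmeas : Measurable f := by
    have hcm : Measurable (fun p : ℝ × ℝ => circleMap 0 p.1 p.2) := by
      unfold circleMap
      fun_prop
    have := hwc.measurable
    simp only [hf]
    fun_prop
  have hfi : Integrable f ((volume.restrict (Ioi (0:ℝ))).prod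
      (volume.restrict (Ioo (-Real.pi) Real.pi))) := by
    rw [integrable_prod_iff hmeas.aestronglyMeasurable]
    constructor
    · filter_upwards [ae_restrict_mem measurableSet_Ioi] with r hr
      exact ((aux_circle a r hr).1).const_mul (r * w r)
    · have hdom : Integrable (fun r : ℝ => (8 * K ^ 2 * (2 * Real.pi * (3 * (‖a‖ + 1) + 1))) *
          (1 + r ^ 2)⁻¹) (volume.restrict (Ioi (0:ℝ))) :=
        (integrable_inv_one_add_sq.const_mul _).restrict
      refine hdom.mono' hmeas.aestronglyMeasurable.norm.integral_prod_right' ?_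
      filter_upwards [ae_restrict_mem measurableSet_Ioi] with r hr
      have hr0 : 0 < r := hr
      rw [Real.norm_of_nonneg (integral_nonneg fun _ => norm_nonneg _)]
      have e : ∀ θ : ℝ, ‖f (r, θ)‖ = (r * w r) * |Real.log ‖circleMap 0 r θ - a‖| := by
        intro θ
        simp only [hf]
        rw [norm_mul, Real.norm_of_nonneg (mul_nonneg hr0.le (hw0 r)), Real.norm_eq_abs]
      simp only [e]
      rw [integral_const_mul]
      have h1 := aux_circle_abs a r hr0
      have h2 := mul_le_mul_of_nonneg_left h1 (hw0 r)
      have hwle : w r ≤ 8 * K ^ 2 / (1 + r ^ 2) ^ 2 := by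
        simp only [hw]
        gcongr
        have : 1 ≤ K ^ 2 := one_le_pow₀ hK
        nlinarith [sq_nonneg r]
      have h3 : 3 * (r * (‖a‖ + r)) + 1 ≤ (3 * (‖a‖ + 1) + 1) * (1 + r ^ 2) := by
        have := norm_nonneg a
        nlinarith [sq_nonneg (r - 1), sq_nonneg r, mul_nonneg this (sq_nonneg (r-1)), mul_nonneg this (sq_nonneg r)]
      calc _ = w r * (r * ∫ θ in Ioo (-Real.pi) Real.pi, |Real.log ‖circleMap 0 r θ - a‖|) := by
              ring
        _ ≤ _ := h2
        _ ≤ (8 * K ^ 2 / (1 + r ^ 2) ^ 2) *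
            (2 * Real.pi * ((3 * (‖a‖ + 1) + 1) * (1 + r ^ 2))) := by
              gcongr
        _ = _ := by field_simp
  have hprod : (volume : Measure (ℝ × ℝ)).restrict (Ioi (0:ℝ) ×ˢ Ioo (-Real.pi) Real.pi) =
      (volume.restrict (Ioi (0:ℝ))).prod (volume.restrict (Ioo (-Real.pi) Real.pi)) := by
    rw [Measure.volume_eq_prod, Measure.prod_restrict]
  rw [hprod, integral_prod _ hfi]
  have hin : ∀ r ∈ Ioi (0:ℝ), ∫ θ in Ioo (-Real.pi) Real.pi, f (r, θ) =
      2 * Real.pi * (r * w r * Real.log (max ‖a‖ r)) := by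
    intro r hr
    simp only [hf]
    rw [integral_const_mul, (aux_circle a r hr).2]
    ring
  have hint : IntegrableOn (fun r : ℝ => r * w r * Real.log (max ‖a‖ r)) (Ioi 0) := by
    have h1 := hfi.integral_prod_left
    have h2 : IntegrableOn (fun r : ℝ => 2 * Real.pi * (r * w r * Real.log (max ‖a‖ r)))
        (Ioi 0) := (integrableOn_congr_fun hin measurableSet_Ioi).1 h1
    have h3 := h2.const_mul (2 * Real.pi)⁻¹
    refine h3.congr (Eventually.of_forall fun r => ?_)
    simp only
    field_simp
  rw [setIntegral_congr_fun measurableSet_Ioi hin, integral_const_mul,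
    aux_radial K ‖a‖ hK (norm_nonneg a) hint]

/-- Example 3.3: the bubbles `u_k`.
With `A = (4(2-μ)/π)^{1/(4-μ)}`, `u_k(x) = 2 log(Ak/(1+k²|x|²))` and
`F_k(x) = 8k²/(1+k²|x|²)²` (so that `-Δu_k = F_k = V_k I_μ[e^{λu_k}χ_{B_2}] e^{λu_k}`),
the function `u_k - Γ∗F_k` is the constant `2 log A - 2 log k`; in particular
`u_k - Γ∗F_k → -∞` uniformly as `k → ∞`. -/
theorem stmt_18
    (μ : ℝ) (hμ : μ ∈ Set.Ioo (0 : ℝ) 2)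
    (lam : ℝ) (hlam : lam = (4 - μ) / 4)
    (A : ℝ) (hA : A = (4 * (2 - μ) / Real.pi) ^ ((1 : ℝ) / (4 - μ)))
    (u : ℕ → E2 → ℝ)
    (hu : ∀ (k : ℕ) (x : E2),
      u k x = 2 * Real.log (A * (k : ℝ) / (1 + (k : ℝ) ^ 2 * ‖x‖ ^ 2)))
    (F : ℕ → E2 → ℝ)
    (hF : ∀ (k : ℕ) (x : E2),
      F k x = 8 * (k : ℝ) ^ 2 / (1 + (k : ℝ) ^ 2 * ‖x‖ ^ 2) ^ 2) :
    (∀ k : ℕ, 1 ≤ k → ∀ x : E2,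
      u k x - ∫ y : E2, gammaKer (x - y) * F k y
        = 2 * Real.log A - 2 * Real.log (k : ℝ)) ∧
    Tendsto (fun k : ℕ => 2 * Real.log A - 2 * Real.log (k : ℝ)) atTop atBot := by
  have hApos : 0 < A := by
    rw [hA]
    apply Real.rpow_pos_of_pos
    have := hμ.2
    have := Real.pi_pos
    apply div_pos _ this
    linarith
  constructor
  · intro k hk x
    have hK : (1:ℝ) ≤ (k:ℝ) := by exact_mod_cast hk
    have hK0 : (0:ℝ) < (k:ℝ) := by linarith
    have hpi := Real.pi_pos
    let e := Complex.orthonormalBasisOneI.repr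
    have hint : ∫ y : E2, gammaKer (x - y) * F k y =
        -(1 / (2 * Real.pi)) * ∫ z : ℂ, Real.log ‖z - e.symm x‖ *
          (8 * (k:ℝ) ^ 2 / (1 + (k:ℝ) ^ 2 * ‖z‖ ^ 2) ^ 2) := by
      rw [← integral_const_mul,
        ← e.measurePreserving.integral_comp e.toHomeomorph.measurableEmbedding]
      congr 1
      ext z
      have h1 : ‖x - e z‖ = ‖z - e.symm x‖ := by
        rw [norm_sub_rev, ← e.norm_map (z - e.symm x), map_sub, e.apply_symm_apply]
      rw [gammaKer, hF, h1, e.norm_map]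
      ring
    rw [hint, aux_complex _ hK, hu, e.symm.norm_map,
      Real.log_div (by positivity) (by positivity), Real.log_mul (by positivity) (by positivity)]
    field_simp
    ring
  · have h1 : Tendsto (fun k : ℕ => Real.log (k:ℝ)) atTop atTop :=
      Real.tendsto_log_atTop.comp tendsto_natCast_atTop_atTop
    have h2 := tendsto_atBot_add_const_left atTop (2 * Real.log A)
      (tendsto_neg_atTop_atBot.comp (h1.const_mul_atTop (by norm_num : (0:ℝ) < 2)))
    simpa [sub_eq_add_neg, Function.comp_def] using h2
end
end
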